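/- Let Σ_A(ℕ) be a topologically mixing, finitely primitive (BIP) countable Markov shift, f : Σ_A(ℕ) → ℝ satisfying the Walters condition with Var_1 f < ∞ and P(f) < ∞, and for β > 0 let h_β be the Ruelle eigenfunction of L_{βf}. If β_i → ∞ is a sequence such that (1/β_i) log h_{β_i} converges (uniformly on compact sets) to a function V, then V is a bounded calibrated sub-action for f: V is continuous and bounded, f + V − V∘σ − m(f) ≤ 0 on Σ_A(ℕ), and for every y ∈ Σ_A(ℕ) there exists x ∈ σ^{-1}(y) with f(x) + V(x) − V(σ(x)) − m(f) = 0. -/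

import Mathlib

open Filter Topology MeasureTheory
open scoped ENNReal

/-- The countable Markov shift over alphabet ℕ determined by the 0-1 matrix `A`. -/
def MarkovShift (A : ℕ → ℕ → Bool) : Type :=
  {x : ℕ → ℕ // ∀ i, A (x i) (x (i + 1)) = true}

namespace MarkovShift

variable {A : ℕ → ℕ → Bool}

instance : TopologicalSpace (MarkovShift A) :=
  instTopologicalSpaceSubtype

instance : MeasurableSpace (MarkovShift A) := borel _

instance : BorelSpace (MarkovShift A) := ⟨rfl⟩

/-- The shift map. -/
def shift (x : MarkovShift A) : MarkovShift A :=
  ⟨fun n => x.1 (n + 1), fun i => x.2 (i + 1)⟩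

/-- The cylinder set determined by a finite word. -/
def cylinder (w : List ℕ) : Set (MarkovShift A) :=
  {x | ∀ i : Fin w.length, x.1 i = w.get i}

/-- The cylinder set determined by the first `m` coordinates of `x`. -/
def cylOf (x : MarkovShift A) (m : ℕ) : Set (MarkovShift A) :=
  {y | ∀ i < m, y.1 i = x.1 i}

/-- A symbol is admissible when its cylinder is nonempty. -/
def Admissible (A : ℕ → ℕ → Bool) (a : ℕ) : Prop :=
  ∃ x : MarkovShift A, x.1 0 = a

/-- Topologically mixing. -/
def TopologicallyMixing (A : ℕ → ℕ → Bool) : Prop :=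
  ∀ a b : ℕ, Admissible A a → Admissible A b →
    ∃ N : ℕ, ∀ n ≥ N, ∃ x : MarkovShift A, x.1 0 = a ∧ (shift^[n] x).1 0 = b

/-- Finitely primitive (BIP). -/
def FinitelyPrimitive (A : ℕ → ℕ → Bool) : Prop :=
  ∃ (K₀ : ℕ) (F : Finset ℕ), ∀ a b : ℕ, Admissible A a → Admissible A b →
    ∃ w : List ℕ, w.length = K₀ ∧ (∀ c ∈ w, c ∈ F) ∧
      List.Chain' (fun u v => A u v = true) (a :: (w ++ [b]))

/-- First coordinate where two distinct points disagree. -/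
noncomputable def firstDiff (x y : MarkovShift A) (h : x ≠ y) : ℕ :=
  Nat.find (Function.ne_iff.mp (fun hxy : x.1 = y.1 => h (Subtype.ext hxy)))

open Classical in
/-- The metric `d(x,y) = r^{t(x,y)}`. -/
noncomputable def dist' (r : ℝ) (x y : MarkovShift A) : ℝ :=
  if h : x = y then 0 else r ^ firstDiff x y h

/-- Birkhoff sum `S_n f`. -/
def birkhoff (f : MarkovShift A → ℝ) (n : ℕ) (x : MarkovShift A) : ℝ :=
  ∑ j ∈ Finset.range n, f (shift^[j] x)

/-- The set of values `|S_n f x - S_n f y|` over pairs agreeing on the first `m` coordinates. -/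
def varSet (f : MarkovShift A → ℝ) (n m : ℕ) : Set ℝ :=
  {c | ∃ x y : MarkovShift A, (∀ i < m, x.1 i = y.1 i) ∧ c = |birkhoff f n x - birkhoff f n y|}

/-- `Var_m (S_n f)`. -/
noncomputable def varBirk (f : MarkovShift A → ℝ) (n m : ℕ) : ℝ := sSup (varSet f n m)

/-- `Var_1 f < ∞`. -/
def Var1Finite (f : MarkovShift A → ℝ) : Prop := BddAbove (varSet f 1 1)

/-- The set whose supremum is `sup_{n ≥ 1} Var_{n+k}(S_n f)`. -/
def waltersSet (f : MarkovShift A → ℝ) (k : ℕ) : Set ℝ :=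
  {c | ∃ n, 1 ≤ n ∧ c ∈ varSet f n (n + k)}

/-- `M_k = sup_{n ≥ 1} Var_{n+k}(S_n f)`. -/
noncomputable def waltersSup (f : MarkovShift A → ℝ) (k : ℕ) : ℝ := sSup (waltersSet f k)

/-- The Walters condition. -/
def SatisfiesWalters (f : MarkovShift A → ℝ) : Prop :=
  (∀ k, 1 ≤ k → BddAbove (waltersSet f k)) ∧
    Tendsto (fun k => waltersSup f k) atTop (𝓝 0)

/-- The partition function `Z_n(f,a) = Σ_{σ^n x = x, x₀ = a} e^{S_n f (x)}`. -/
noncomputable def partitionSum (f : MarkovShift A → ℝ) (n : ℕ) (a : ℕ) : ℝ :=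
  ∑' x : {x : MarkovShift A // shift^[n] x = x ∧ x.1 0 = a}, Real.exp (birkhoff f n x.1)

/-- `f` has (finite) Gurevich pressure `p`. -/
def HasGurevichPressure (f : MarkovShift A → ℝ) (p : ℝ) : Prop :=
  ∀ a : ℕ, Admissible A a →
    (∀ n, 1 ≤ n → Summable fun x : {x : MarkovShift A // shift^[n] x = x ∧ x.1 0 = a} =>
        Real.exp (birkhoff f n x.1)) ∧
    Tendsto (fun n : ℕ => (1 / (n : ℝ)) * Real.log (partitionSum f n a)) atTop (𝓝 p)

/-- σ-invariant Borel probability measure. -/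
def IsInvariantProb (μ : Measure (MarkovShift A)) : Prop :=
  IsProbabilityMeasure μ ∧ μ.map shift = μ

/-- `m(f)`, the maximal ergodic average. -/
noncomputable def mf (f : MarkovShift A → ℝ) : ℝ :=
  sSup {c | ∃ μ : Measure (MarkovShift A),
    IsInvariantProb μ ∧ Integrable f μ ∧ ∫ x, f x ∂μ = c}

/-- A maximizing measure for `f`. -/
def IsMaximizing (f : MarkovShift A → ℝ) (μ : Measure (MarkovShift A)) : Prop :=
  IsInvariantProb μ ∧ Integrable f μ ∧ ∫ x, f x ∂μ = mf f

/-- Bounded real valued function. -/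
def BoundedFun (g : MarkovShift A → ℝ) : Prop := ∃ C, ∀ x, |g x| ≤ C

/-- A bounded calibrated sub-action for `f`. -/
def IsCalibratedSubaction (f V : MarkovShift A → ℝ) : Prop :=
  Continuous V ∧ BoundedFun V ∧
    (∀ x, f x + V x - V (shift x) - mf f ≤ 0) ∧
    (∀ y, ∃ x, shift x = y ∧ f x + V x - V (shift x) - mf f = 0)

/-- The Ruelle transfer operator `(L_g u)(x) = Σ_{σ y = x} e^{g(y)} u(y)`. -/
noncomputable def ruelle (g u : MarkovShift A → ℝ) (x : MarkovShift A) : ℝ :=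
  ∑' y : {y : MarkovShift A // shift y = x}, Real.exp (g y.1) * u y.1

/-- Ruelle-Perron-Frobenius data for the potential `f` with pressure `p`:
eigenfunction `h`, eigenmeasure `ν`. -/
def IsRPF (f : MarkovShift A → ℝ) (p : ℝ) (h : MarkovShift A → ℝ)
    (ν : Measure (MarkovShift A)) : Prop :=
  Continuous h ∧ (∀ x, 0 < h x) ∧
    (∀ x, ruelle f h x = Real.exp p * h x) ∧
    IsProbabilityMeasure ν ∧
    (∀ g : MarkovShift A → ℝ, Continuous g → BoundedFun g →
      ∫ x, ruelle f g x ∂ν = Real.exp p * ∫ x, g x ∂ν) ∧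
    ∫ x, h x ∂ν = 1

/-- The Gibbs measure `dμ = h dν`. -/
noncomputable def gibbs (h : MarkovShift A → ℝ) (ν : Measure (MarkovShift A)) :
    Measure (MarkovShift A) :=
  ν.withDensity fun x => ENNReal.ofReal (h x)

/-- The Mañé potential `S_f(x,y)` (with respect to the metric of parameter `r`). -/
noncomputable def manePot (r : ℝ) (f : MarkovShift A → ℝ) (x y : MarkovShift A) : EReal :=
  ⨅ ε : {ε : ℝ // 0 < ε}, ⨆ n : {n : ℕ // 1 ≤ n},
    ⨆ _z : {z : MarkovShift A // dist' r x z < ε.1 ∧ shift^[n.1] z = y},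
      ((birkhoff (fun w => f w - mf f) n.1 _z.1 : ℝ) : EReal)

/-- The (topological) support of a measure. -/
def msupport (μ : Measure (MarkovShift A)) : Set (MarkovShift A) :=
  {x | ∀ U : Set (MarkovShift A), IsOpen U → x ∈ U → 0 < μ U}

end MarkovShift

namespace MarkovShift

variable {A : ℕ → ℕ → Bool}

lemma shift_iter_val (n : ℕ) (x : MarkovShift A) (i : ℕ) : (shift^[n] x).1 i = x.1 (i + n) := by
  induction n generalizing x with
  | zero => rfl
  | succ n ih =>
    rw [Function.iterate_succ_apply, ih]
    show x.1 (i + n + 1) = _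
    rfl

lemma pt_ext {x y : MarkovShift A} (h : ∀ i, x.1 i = y.1 i) : x = y :=
  Subtype.ext (funext h)

lemma continuous_coord (i : ℕ) : Continuous (fun x : MarkovShift A => x.1 i) :=
  (continuous_apply i).comp continuous_subtype_val

lemma continuous_shift : Continuous (shift : MarkovShift A → MarkovShift A) :=
  Continuous.subtype_mk (continuous_pi fun i => continuous_coord (i + 1)) _

lemma isOpen_cylOf (x : MarkovShift A) (m : ℕ) : IsOpen (cylOf x m) := by
  have : cylOf x m = ⋂ i ∈ Finset.range m, (fun y : MarkovShift A => y.1 i) ⁻¹' {x.1 i} := by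
    ext y; simp [cylOf]
  rw [this]
  exact isOpen_biInter_finset fun i _ => (isOpen_discrete _).preimage (continuous_coord i)

lemma mem_cylOf_self (x : MarkovShift A) (m : ℕ) : x ∈ cylOf x m := fun _ _ => rfl

lemma exists_cylOf_subset (x : MarkovShift A) {U : Set (MarkovShift A)} (hU : U ∈ 𝓝 x) :
    ∃ m, cylOf x m ⊆ U := by
  obtain ⟨t, ht, htU⟩ : ∃ t ∈ 𝓝 (x.1 : ℕ → ℕ), ∀ y : MarkovShift A, y.1 ∈ t → y ∈ U :=
    (mem_nhds_induced _ _ _).1 hU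
  rw [nhds_pi, Filter.mem_pi] at ht
  obtain ⟨I, hI, s, hs, hst⟩ := ht
  obtain ⟨m, hm⟩ := hI.bddAbove
  refine ⟨m + 1, fun y hy => htU y (hst fun i hi => ?_)⟩
  rw [hy i (Nat.lt_succ_of_le (hm hi))]
  exact mem_of_mem_nhds (hs i)

instance : TopologicalSpace.MetrizableSpace (MarkovShift A) :=
  haveI : TopologicalSpace.MetrizableSpace (ℕ → ℕ) :=
    TopologicalSpace.metrizableSpace_of_t3_secondCountable _
  (Topology.IsEmbedding.subtypeVal
    (p := fun x : ℕ → ℕ => ∀ i, A (x i) (x (i + 1)) = true)).metrizableSpace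

/-- Constructor for points of the shift space. -/
def mkPt (g : ℕ → ℕ) (hg : ∀ i, A (g i) (g (i + 1)) = true) : MarkovShift A := ⟨g, hg⟩

lemma mkPt_val (g : ℕ → ℕ) (hg : ∀ i, A (g i) (g (i + 1)) = true) (i : ℕ) :
    (mkPt g hg).1 i = g i := rfl

lemma exists_glue (g : ℕ → ℕ) (n : ℕ) (x : MarkovShift A)
    (hg : ∀ i < n, A (g i) (g (i + 1)) = true) (hn : g n = x.1 0) :
    ∃ z : MarkovShift A, (∀ i ≤ n, z.1 i = g i) ∧ shift^[n] z = x := by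
  refine ⟨mkPt (fun i => if i < n then g i else x.1 (i - n)) (fun i => ?_), fun i hi => ?_,
    pt_ext fun i => ?_⟩
  · by_cases h1 : i + 1 < n
    · simp only [h1, if_true, show i < n by omega]; exact hg i (by omega)
    · by_cases h2 : i < n
      · have h3 : i + 1 = n := by omega
        simp only [h1, if_false, h2, if_true]
        rw [h3, Nat.sub_self, ← hn, ← h3]; exact hg i h2
      · simp only [h1, h2, if_false]
        rw [show i + 1 - n = i - n + 1 by omega]; exact x.2 _
  · by_cases h2 : i < n
    · simp [mkPt_val, h2]
    · have : i = n := by omega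
      subst this; simp [mkPt_val, hn]
  · rw [shift_iter_val, mkPt_val]; simp

lemma chain_fun {K : ℕ} {a b : ℕ} {w : List ℕ} (hw : w.length = K)
    (hc : List.IsChain (fun u v => A u v = true) (a :: (w ++ [b]))) :
    ∃ u : ℕ → ℕ, u 0 = a ∧ u (K + 1) = b ∧ (∀ i < K + 1, A (u i) (u (i + 1)) = true) ∧
      ∀ i, 1 ≤ i → i ≤ K → u i ∈ w := by
  refine ⟨fun i => (a :: (w ++ [b])).getD i 0, rfl, ?_, ?_, ?_⟩
  · subst hw; simp
  · intro i hi
    rw [List.isChain_iff_getElem] at hc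
    have h1 : i + 1 < (a :: (w ++ [b])).length := by simp; omega
    have := hc i h1
    beta_reduce
    rw [List.getD_eq_getElem _ _ h1, List.getD_eq_getElem _ _ (by omega)]
    exact this
  · intro i h1 h2
    obtain ⟨j, rfl⟩ : ∃ j, i = j + 1 := ⟨i - 1, by omega⟩
    have h3 : j < w.length := by omega
    simp only [List.getD_cons_succ]
    rw [List.getD_append _ _ _ _ h3, List.getD_eq_getElem _ _ h3]
    exact List.getElem_mem _

lemma bip_fun (hbip : FinitelyPrimitive A) : ∃ (K : ℕ) (F : Finset ℕ), ∀ (a b : ℕ),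
    Admissible A a → Admissible A b →
    ∃ u : ℕ → ℕ, u 0 = a ∧ u (K + 1) = b ∧ (∀ i < K + 1, A (u i) (u (i + 1)) = true) ∧
      ∀ i, 1 ≤ i → i ≤ K → u i ∈ F := by
  obtain ⟨K, F, h⟩ := hbip
  refine ⟨K, F, fun a b ha hb => ?_⟩
  obtain ⟨w, hw, hF, hc⟩ := h a b ha hb
  obtain ⟨u, h1, h2, h3, h4⟩ := chain_fun hw hc
  exact ⟨u, h1, h2, h3, fun i hi hi' => hF _ (h4 i hi hi')⟩

/-- Reformulated finite primitivity. -/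
def Bip (A : ℕ → ℕ → Bool) (K : ℕ) (F : Finset ℕ) : Prop :=
  ∀ (a b : ℕ), Admissible A a → Admissible A b →
    ∃ u : ℕ → ℕ, u 0 = a ∧ u (K + 1) = b ∧ (∀ i < K + 1, A (u i) (u (i + 1)) = true) ∧
      ∀ i, 1 ≤ i → i ≤ K → u i ∈ F

lemma admissible_coord (x : MarkovShift A) (n : ℕ) : Admissible A (x.1 n) :=
  ⟨shift^[n] x, by rw [shift_iter_val]; simp⟩

lemma exists_link {K : ℕ} {F : Finset ℕ} (hb : Bip A K F) (n : ℕ) (x x' : MarkovShift A) :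
    ∃ z : MarkovShift A, (∀ i ≤ n, z.1 i = x.1 i) ∧ shift^[n + 1 + K] z = x' ∧
      ∀ i, n + 1 ≤ i → i < n + 1 + K → z.1 i ∈ F := by
  obtain ⟨u, h0, h1, h2, h3⟩ := hb _ _ (admissible_coord x n) (admissible_coord x' 0)
  obtain ⟨z1, hz1, hz1'⟩ := exists_glue u (K + 1) x' h2 h1
  obtain ⟨z, hz, hz'⟩ := exists_glue x.1 n z1 (fun i _ => x.2 i) (by rw [hz1 0 (by omega), h0])
  refine ⟨z, hz, ?_, ?_⟩
  · rw [show n + 1 + K = (K + 1) + n by omega, Function.iterate_add_apply, hz', hz1']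
  · intro i hi hi'
    have : z.1 i = z1.1 (i - n) := by
      rw [← hz', shift_iter_val, Nat.sub_add_cancel (by omega)]
    rw [this, hz1 _ (by omega)]
    exact h3 _ (by omega) (by omega)

lemma exists_periodic {K : ℕ} {F : Finset ℕ} (hb : Bip A K F) (n : ℕ) (x : MarkovShift A) :
    ∃ z : MarkovShift A, (∀ i ≤ n, z.1 i = x.1 i) ∧ shift^[n + 1 + K] z = z ∧
      ∀ i, n + 1 ≤ i → i < n + 1 + K → z.1 i ∈ F := by
  obtain ⟨u, h0, h1, h2, h3⟩ := hb _ _ (admissible_coord x n) (admissible_coord x 0)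
  set N := n + 1 + K with hN
  set g : ℕ → ℕ := fun i => if i ≤ n then x.1 i else u (i - n) with hg
  have hgA : ∀ i < N, A (g i) (g (i + 1)) = true := by
    intro i hi
    by_cases h4 : i + 1 ≤ n
    · simp only [hg, h4, if_true, show i ≤ n by omega]; exact x.2 i
    · by_cases h5 : i ≤ n
      · have : i = n := by omega
        subst this
        simp only [hg, h4, if_false, le_refl, if_true]
        rw [← h0, show i + 1 - i = 0 + 1 by omega]; exact h2 0 (by omega)
      · simp only [hg, h4, h5, if_false]
        rw [show i + 1 - n = i - n + 1 by omega]; exact h2 _ (by omega)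
  have hgN : g N = g 0 := by
    simp only [hg, show ¬ N ≤ n by omega, if_false, Nat.zero_le, if_true]
    rw [show N - n = K + 1 by omega, h1]
  refine ⟨mkPt (fun i => g (i % N)) (fun i => ?_), ?_, ?_, ?_⟩
  · have hlt : i % N < N := Nat.mod_lt _ (by omega)
    have := hgA (i % N) hlt
    beta_reduce
    by_cases h4 : i % N + 1 < N
    · rw [Nat.add_mod i 1 N, Nat.mod_eq_of_lt (show 1 < N by omega), Nat.mod_eq_of_lt h4]
      exact this
    · have h5 : i % N + 1 = N := by omega
      have h6 : (i + 1) % N = 0 := by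
        rw [← Nat.mod_add_mod, h5, Nat.mod_self]
      rw [h6, ← hgN]
      rw [h5] at this; exact this
  · intro i hi
    show g (i % N) = _
    rw [Nat.mod_eq_of_lt (by omega)]; simp [hg, hi]
  · refine pt_ext fun i => ?_
    rw [shift_iter_val]
    show g ((i + N) % N) = g (i % N)
    simp
  · intro i hi hi'
    show g (i % N) ∈ F
    rw [Nat.mod_eq_of_lt hi']
    simp only [hg, show ¬ i ≤ n by omega, if_false]
    exact h3 _ (by omega) (by omega)

lemma birkhoff_add (f : MarkovShift A → ℝ) (n m : ℕ) (x : MarkovShift A) :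
    birkhoff f (n + m) x = birkhoff f n x + birkhoff f m (shift^[n] x) := by
  unfold birkhoff
  rw [Finset.sum_range_add]
  congr 1
  refine Finset.sum_congr rfl fun j _ => ?_
  rw [← Function.iterate_add_apply, add_comm]

lemma birkhoff_one (f : MarkovShift A → ℝ) (x : MarkovShift A) : birkhoff f 1 x = f x := by
  simp [birkhoff]

lemma birkhoff_succ (f : MarkovShift A → ℝ) (n : ℕ) (x : MarkovShift A) :
    birkhoff f (n + 1) x = f x + birkhoff f n (shift x) := by
  rw [add_comm, birkhoff_add, birkhoff_one]; rfl

lemma birkhoff_mul (f : MarkovShift A → ℝ) (β : ℝ) (n : ℕ) (x : MarkovShift A) :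
    birkhoff (fun x => β * f x) n x = β * birkhoff f n x := by
  simp [birkhoff, Finset.mul_sum]

/-- Constants controlling `f`. -/
structure Ctl (f : MarkovShift A → ℝ) (K : ℕ) (F : Finset ℕ) (W : ℕ → ℝ) (D C : ℝ) : Prop where
  bip : Bip A K F
  hW : ∀ k, 1 ≤ k → ∀ n x y, (∀ i < n + k, x.1 i = y.1 i) →
    |birkhoff f n x - birkhoff f n y| ≤ W k
  W0 : ∀ k, 0 ≤ W k
  Wlim : Tendsto W atTop (𝓝 0)
  hD : ∀ x y : MarkovShift A, x.1 0 = y.1 0 → |f x - f y| ≤ D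
  D0 : 0 ≤ D
  hC : ∀ x : MarkovShift A, x.1 0 ∈ F → |f x| ≤ C
  C0 : 0 ≤ C

lemma exists_ctl (hbip : FinitelyPrimitive A) (f : MarkovShift A → ℝ)
    (hWalters : SatisfiesWalters f) (hVar1 : Var1Finite f) :
    ∃ K F W D C, Ctl f K F W D C := by
  obtain ⟨K, F, hb⟩ := bip_fun hbip
  obtain ⟨D, hD⟩ := hVar1
  have hD' : ∀ x y : MarkovShift A, x.1 0 = y.1 0 → |f x - f y| ≤ max D 0 := by
    intro x y hxy
    refine le_max_of_le_left (hD ⟨x, y, fun i hi => ?_, by simp only [birkhoff_one]⟩)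
    obtain rfl : i = 0 := by omega
    exact hxy
  have hC : ∀ F : Finset ℕ, ∃ C, 0 ≤ C ∧ ∀ x : MarkovShift A, x.1 0 ∈ F → |f x| ≤ C := by
    intro F
    induction F using Finset.induction_on with
    | empty => exact ⟨0, le_refl _, by simp⟩
    | insert a s _ ih =>
      obtain ⟨C, hC0, hC⟩ := ih
      by_cases ha : ∃ y : MarkovShift A, y.1 0 = a
      · obtain ⟨y, hy⟩ := ha
        refine ⟨max C (|f y| + max D 0), le_max_of_le_left hC0, fun x hx => ?_⟩
        rcases Finset.mem_insert.1 hx with h | h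
        · have := hD' x y (by rw [h, hy])
          have h2 := abs_sub_abs_le_abs_sub (f x) (f y)
          exact le_max_of_le_right (by linarith)
        · exact le_max_of_le_left (hC x h)
      · refine ⟨C, hC0, fun x hx => ?_⟩
        rcases Finset.mem_insert.1 hx with h | h
        · exact absurd ⟨x, h⟩ ha
        · exact hC x h
  obtain ⟨C, hC0, hC⟩ := hC F
  have hW0 : ∀ k, 0 ≤ waltersSup f k := by
    intro k
    refine Real.sSup_nonneg ?_
    rintro c ⟨n, _, x, y, _, rfl⟩
    exact abs_nonneg _
  refine ⟨K, F, waltersSup f, max D 0, C, hb, ?_, hW0, hWalters.2, hD', le_max_right _ _, hC, hC0⟩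
  intro k hk n x y hxy
  rcases Nat.eq_zero_or_pos n with rfl | hn
  · simpa [birkhoff] using hW0 k
  · exact le_csSup (hWalters.1 k hk) ⟨n, hn, x, y, hxy, rfl⟩

section
variable {f : MarkovShift A → ℝ} {K : ℕ} {F : Finset ℕ} {W : ℕ → ℝ} {D C : ℝ}

lemma Ctl.continuous (hc : Ctl f K F W D C) : Continuous f := by
  rw [continuous_iff_continuousAt]
  intro x
  rw [ContinuousAt, Metric.tendsto_nhds]
  intro ε hε
  obtain ⟨k, hk, hk1⟩ := ((hc.Wlim.eventually (gt_mem_nhds hε)).and (eventually_ge_atTop 1)).exists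
  filter_upwards [(isOpen_cylOf x (1 + k)).mem_nhds (mem_cylOf_self _ _)] with y hy
  have := hc.hW k hk1 1 y x hy
  simp only [birkhoff_one] at this
  rw [Real.dist_eq]; linarith

lemma Ctl.birkF (hc : Ctl f K F W D C) (m : ℕ) (z : MarkovShift A) (hz : ∀ i < m, z.1 i ∈ F) :
    |birkhoff f m z| ≤ m * C := by
  unfold birkhoff
  refine (Finset.abs_sum_le_sum_abs _ _).trans ?_
  refine (Finset.sum_le_card_nsmul _ _ C fun j hj => hc.hC _ ?_).trans (by simp)
  rw [shift_iter_val, zero_add]; exact hz j (Finset.mem_range.1 hj)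

lemma Ctl.var_succ (hc : Ctl f K F W D C) (n : ℕ) (x y : MarkovShift A)
    (h : ∀ i ≤ n, x.1 i = y.1 i) :
    |birkhoff f (n + 1) x - birkhoff f (n + 1) y| ≤ W 1 + D := by
  rw [birkhoff_add, birkhoff_add, birkhoff_one, birkhoff_one]
  have h1 := hc.hW 1 le_rfl n x y (fun i hi => h i (by omega))
  have h2 := hc.hD (shift^[n] x) (shift^[n] y)
    (by rw [shift_iter_val, shift_iter_val, zero_add]; exact h n le_rfl)
  rw [abs_le] at *
  constructor <;> linarith

/-- Sum over a word of length `n+1` followed by `K` letters from `F`. -/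
lemma Ctl.link_birk (hc : Ctl f K F W D C) (n : ℕ) (x z : MarkovShift A)
    (h : ∀ i ≤ n, z.1 i = x.1 i) (hF : ∀ i, n + 1 ≤ i → i < n + 1 + K → z.1 i ∈ F) :
    birkhoff f (n + 1) x ≤ birkhoff f (n + 1 + K) z + (W 1 + D + K * C) := by
  rw [birkhoff_add f (n + 1)]
  have h1 := hc.var_succ n z x h
  have h2 := hc.birkF K (shift^[n+1] z) (fun i hi => by
    rw [shift_iter_val]; exact hF _ (by omega) (by omega))
  rw [abs_le] at *
  linarith

end

end MarkovShift

namespace MarkovShift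

variable {A : ℕ → ℕ → Bool}

/-- Iterated transfer operator on extended nonnegative functions. -/
noncomputable def opN (φ : MarkovShift A → ℝ) (n : ℕ) (u : MarkovShift A → ℝ≥0∞)
    (x : MarkovShift A) : ℝ≥0∞ :=
  ∑' z : {z : MarkovShift A // shift^[n] z = x}, ENNReal.ofReal (Real.exp (birkhoff φ n z.1)) * u z.1

/-- Transfer operator on extended nonnegative functions. -/
noncomputable def op1 (φ : MarkovShift A → ℝ) (u : MarkovShift A → ℝ≥0∞)
    (x : MarkovShift A) : ℝ≥0∞ :=
  ∑' z : {z : MarkovShift A // shift z = x}, ENNReal.ofReal (Real.exp (φ z.1)) * u z.1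

/-- Decomposition of the fibers of the iterated shift. -/
def fiberEquiv (n : ℕ) (x : MarkovShift A) :
    (Σ y : {y : MarkovShift A // shift^[n] y = x}, {z : MarkovShift A // shift z = y.1}) ≃
      {z : MarkovShift A // shift^[n + 1] z = x} where
  toFun p := ⟨p.2.1, by rw [Function.iterate_succ_apply, p.2.2, p.1.2]⟩
  invFun z := ⟨⟨shift z.1, by rw [← Function.iterate_succ_apply, z.2]⟩, ⟨z.1, rfl⟩⟩
  left_inv := by 
    rintro ⟨⟨y, hy⟩, ⟨z, hz⟩⟩
    have hz' : shift z = y := hz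
    subst hz'
    rfl
  right_inv := by rintro ⟨z, hz⟩; rfl

lemma opN_succ (φ : MarkovShift A → ℝ) (n : ℕ) (u : MarkovShift A → ℝ≥0∞) :
    opN φ (n + 1) u = opN φ n (op1 φ u) := by
  funext x
  unfold opN
  rw [← (fiberEquiv n x).tsum_eq, ENNReal.tsum_sigma']
  refine tsum_congr fun y => ?_
  unfold op1
  rw [← ENNReal.tsum_mul_left]
  refine tsum_congr fun z => ?_
  show ENNReal.ofReal (Real.exp (birkhoff φ (n + 1) z.1)) * u z.1 = _
  rw [birkhoff_succ, z.2, Real.exp_add, ENNReal.ofReal_mul (Real.exp_nonneg _)]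
  ring

lemma opN_zero (φ : MarkovShift A → ℝ) (u : MarkovShift A → ℝ≥0∞) : opN φ 0 u = u := by
  funext x
  unfold opN
  rw [tsum_eq_single ⟨x, rfl⟩]
  · simp [birkhoff]
  · rintro ⟨z, hz⟩ h
    exact absurd (Subtype.ext hz) h

lemma opN_one (φ : MarkovShift A → ℝ) (u : MarkovShift A → ℝ≥0∞) : opN φ 1 u = op1 φ u := by
  rw [show 1 = 0 + 1 from rfl, opN_succ, opN_zero]

lemma opN_mono (φ : MarkovShift A → ℝ) (n : ℕ) {u v : MarkovShift A → ℝ≥0∞} (h : ∀ x, u x ≤ v x)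
    (x : MarkovShift A) : opN φ n u x ≤ opN φ n v x :=
  ENNReal.tsum_le_tsum fun z => by gcongr; exact h _

lemma opN_add (φ : MarkovShift A → ℝ) (n : ℕ) (u v : MarkovShift A → ℝ≥0∞)
    (x : MarkovShift A) : opN φ n (fun x => u x + v x) x = opN φ n u x + opN φ n v x := by
  unfold opN
  rw [← ENNReal.tsum_add]
  exact tsum_congr fun z => mul_add _ _ _

lemma opN_smul (φ : MarkovShift A → ℝ) (n : ℕ) (c : ℝ≥0∞) (u : MarkovShift A → ℝ≥0∞)
    (x : MarkovShift A) : opN φ n (fun x => c * u x) x = c * opN φ n u x := by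
  unfold opN
  rw [← ENNReal.tsum_mul_left]
  exact tsum_congr fun z => by ring

lemma opN_eigen (φ : MarkovShift A → ℝ) (c : ℝ≥0∞) (H : MarkovShift A → ℝ≥0∞)
    (hH : op1 φ H = fun x => c * H x) (n : ℕ) (x : MarkovShift A) :
    opN φ n H x = c ^ n * H x := by
  induction n with
  | zero => simp [opN_zero]
  | succ n ih => rw [opN_succ, hH, opN_smul, ih, pow_succ]; ring

lemma tsum_le_of_inj {α β : Type*} (T : α → β) (hT : Function.Injective T) (a : α → ℝ≥0∞)
    (b : β → ℝ≥0∞) (c : ℝ≥0∞) (h : ∀ z, a z ≤ c * b (T z)) : ∑' z, a z ≤ c * ∑' z, b z := by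
  calc ∑' z, a z ≤ ∑' z, c * b (T z) := ENNReal.tsum_le_tsum h
    _ = c * ∑' z, b (T z) := ENNReal.tsum_mul_left
    _ ≤ _ := by gcongr; exact ENNReal.tsum_comp_le_tsum_of_injective hT b

/-- Prepend a symbol when allowed. -/
def cons (b : ℕ) (x : MarkovShift A) : MarkovShift A :=
  if h : A b (x.1 0) = true then
    mkPt (fun i => Nat.casesOn i b x.1) (fun i => by
      cases i with
      | zero => exact h
      | succ i => exact x.2 i)
  else x

lemma cons_zero (b : ℕ) (x : MarkovShift A) (h : A b (x.1 0) = true) : (cons b x).1 0 = b := by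
  simp [cons, h, mkPt_val]

lemma cons_succ (b : ℕ) (x : MarkovShift A) (h : A b (x.1 0) = true) (i : ℕ) :
    (cons b x).1 (i + 1) = x.1 i := by
  simp [cons, h, mkPt_val]

lemma shift_val (x : MarkovShift A) (i : ℕ) : (shift x).1 i = x.1 (i + 1) := rfl

lemma shift_cons (b : ℕ) (x : MarkovShift A) (h : A b (x.1 0) = true) : shift (cons b x) = x :=
  pt_ext fun i => by rw [shift_val, cons_succ b x h]

lemma fiber_inj {x z z' : MarkovShift A} (h : shift z = x) (h' : shift z' = x)
    (h0 : z.1 0 = z'.1 0) : z = z' := by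
  refine pt_ext fun i => ?_
  cases i with
  | zero => exact h0
  | succ i => rw [← shift_val, ← shift_val, h, h']

lemma continuous_cons (b : ℕ) : Continuous (cons b : MarkovShift A → MarkovShift A) := by
  refine continuous_induced_rng.2 (continuous_pi fun i => ?_)
  have key : ∀ j k, Continuous (fun x : MarkovShift A =>
      if A b (x.1 0) = true then x.1 j else x.1 k) := fun j k =>
    (continuous_of_discreteTopology
      (f := fun p : ℕ × ℕ × ℕ => if A b p.1 = true then p.2.1 else p.2.2)).comp
      ((continuous_coord 0).prodMk ((continuous_coord j).prodMk (continuous_coord k)))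
  cases i with
  | zero =>
    have : Continuous (fun x : MarkovShift A => if A b (x.1 0) = true then b else x.1 0) :=
      (continuous_of_discreteTopology
        (f := fun p : ℕ => if A b p = true then b else p)).comp (continuous_coord 0)
    convert this using 2 with x
    show (cons b x).1 0 = _
    split_ifs with h
    · exact cons_zero b x h
    · simp [cons, h]
  | succ i =>
    convert key i (i + 1) using 2 with x
    show (cons b x).1 (i + 1) = _
    split_ifs with h
    · exact cons_succ b x h i
    · simp [cons, h]

lemma op1_eq (φ : MarkovShift A → ℝ) (u : MarkovShift A → ℝ≥0∞) (x : MarkovShift A) :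
    op1 φ u x = ∑' b : ℕ, if A b (x.1 0) = true then
      ENNReal.ofReal (Real.exp (φ (cons b x))) * u (cons b x) else 0 := by
  have hinj : Function.Injective (fun z : {z : MarkovShift A // shift z = x} => z.1.1 0) :=
    fun z z' h => Subtype.ext (fiber_inj z.2 z'.2 h)
  rw [← hinj.tsum_eq]
  · unfold op1
    refine tsum_congr fun z => ?_
    have h : A (z.1.1 0) (x.1 0) = true := by
      have := z.1.2 0
      rwa [← shift_val, z.2] at this
    have h2 : cons (z.1.1 0) x = z.1 := fiber_inj (shift_cons _ _ h) z.2 (cons_zero _ _ h)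
    rw [if_pos h, h2]
  · intro b hb
    rw [Function.mem_support] at hb
    by_cases h : A b (x.1 0) = true
    · exact ⟨⟨cons b x, shift_cons b x h⟩, cons_zero b x h⟩
    · simp [h] at hb

lemma measurable_op1 {φ : MarkovShift A → ℝ} (hφ : Measurable φ) {u : MarkovShift A → ℝ≥0∞}
    (hu : Measurable u) : Measurable (op1 φ u) := by
  have : op1 φ u = fun x => ∑' b : ℕ, if A b (x.1 0) = true then
      ENNReal.ofReal (Real.exp (φ (cons b x))) * u (cons b x) else 0 := funext (op1_eq φ u)
  rw [this]
  refine Measurable.tsum fun b => ?_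
  have hc : Measurable (cons b : MarkovShift A → MarkovShift A) := (continuous_cons b).measurable
  refine Measurable.ite ?_ ?_ measurable_const
  · exact (continuous_coord (A := A) 0).measurable (t := {a | A b a = true}) (by trivial)
  · exact (((Real.measurable_exp.comp (hφ.comp hc)).ennreal_ofReal)).mul (hu.comp hc)

/-- The kernel of the transfer operator. -/
noncomputable def kern (φ : MarkovShift A → ℝ) (x : MarkovShift A) : Measure (MarkovShift A) :=
  Measure.sum fun z : {z : MarkovShift A // shift z = x} =>
    ENNReal.ofReal (Real.exp (φ z.1)) • Measure.dirac z.1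

lemma lintegral_kern (φ : MarkovShift A → ℝ) (x : MarkovShift A) {u : MarkovShift A → ℝ≥0∞}
    (hu : Measurable u) : ∫⁻ y, u y ∂(kern φ x) = op1 φ u x := by
  unfold kern op1
  rw [lintegral_sum_measure]
  refine tsum_congr fun z => ?_
  rw [lintegral_smul_measure, lintegral_dirac' _ hu, smul_eq_mul]

lemma measurable_kern {φ : MarkovShift A → ℝ} (hφ : Measurable φ) : Measurable (kern φ) := by
  refine Measure.measurable_of_measurable_coe _ fun s hs => ?_
  have : (fun x => kern φ x s) = op1 φ (s.indicator 1) := by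
    funext x
    rw [← lintegral_kern φ x (measurable_one.indicator hs), lintegral_indicator_one hs]
  rw [this]
  exact measurable_op1 hφ (measurable_one.indicator hs)

lemma lintegral_op1 {φ : MarkovShift A → ℝ} (hφ : Measurable φ) {p : ℝ} {h : MarkovShift A → ℝ}
    {ν : Measure (MarkovShift A)} (hR : IsRPF φ p h ν) {B : ℝ≥0∞} (hB : B ≠ ∞)
    (hle : ∀ x, op1 φ (fun _ => 1) x ≤ B) {u : MarkovShift A → ℝ≥0∞} (hu : Measurable u) :
    ∫⁻ x, op1 φ u x ∂ν = ENNReal.ofReal (Real.exp p) * ∫⁻ x, u x ∂ν := by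
  obtain ⟨-, -, -, hprob, hconf, -⟩ := hR
  have hbind : ∀ {u : MarkovShift A → ℝ≥0∞}, Measurable u →
      ∫⁻ x, u x ∂(ν.bind (kern φ)) = ∫⁻ x, op1 φ u x ∂ν := by
    intro u hu
    rw [Measure.lintegral_bind (measurable_kern hφ).aemeasurable hu.aemeasurable]
    exact lintegral_congr fun x => lintegral_kern φ x hu
  have hfin : ∀ {c : ℝ≥0∞}, c ≠ ∞ → ∀ {u : MarkovShift A → ℝ≥0∞}, (∀ x, u x ≤ c) →
      ∀ x, op1 φ u x ≤ c * B := by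
    intro c hc u hu x
    rw [← opN_one]
    refine (opN_mono φ 1 (v := fun _ => c * 1) (fun x => by simpa using hu x) x).trans ?_
    rw [opN_smul, opN_one]
    gcongr
    exact hle x
  have hfin' : ∀ {c : ℝ≥0∞}, c ≠ ∞ → ∀ {u : MarkovShift A → ℝ≥0∞}, (∀ x, u x ≤ c) →
      ∫⁻ x, op1 φ u x ∂ν < ∞ := by
    intro c hc u hu
    refine (lintegral_mono (hfin hc hu)).trans_lt ?_
    simpa using ENNReal.mul_lt_top hc.lt_top hB.lt_top
  have heq : ν.bind (kern φ) = ENNReal.ofReal (Real.exp p) • ν := by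
    have : IsFiniteMeasure (ν.bind (kern φ)) := by
      refine ⟨?_⟩
      rw [← lintegral_one, hbind measurable_const]
      exact hfin' ENNReal.one_ne_top (fun x => le_rfl)
    have : IsFiniteMeasure (ENNReal.ofReal (Real.exp p) • ν) := ν.smul_finite ENNReal.ofReal_ne_top
    refine ext_of_forall_lintegral_eq_of_IsFiniteMeasure fun g => ?_
    have hgm : Measurable (fun x => ((g x : NNReal) : ℝ≥0∞)) :=
      g.continuous.measurable.coe_nnreal_ennreal
    obtain ⟨c, hc⟩ : ∃ c : NNReal, ∀ x, g x ≤ c :=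
      ⟨nndist g 0, fun x => BoundedContinuousFunction.NNReal.upper_bound g x⟩
    have hc' : ∀ x, ((g x : NNReal) : ℝ≥0∞) ≤ c := fun x => by exact_mod_cast hc x
    rw [hbind hgm, lintegral_smul_measure, smul_eq_mul]
    have h1 := hconf (fun x => (g x : ℝ)) (NNReal.continuous_coe.comp g.continuous)
      ⟨c, fun x => by rw [abs_of_nonneg (NNReal.coe_nonneg _)]; exact_mod_cast hc x⟩
    have h2 : ∀ x, ruelle φ (fun x => (g x : ℝ)) x = (op1 φ (fun x => (g x : ℝ≥0∞)) x).toReal := by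
      intro x
      unfold ruelle op1
      rw [ENNReal.tsum_toReal_eq]
      · refine tsum_congr fun z => ?_
        rw [ENNReal.toReal_mul, ENNReal.toReal_ofReal (Real.exp_nonneg _)]
        rfl
      · intro z
        exact ENNReal.mul_ne_top ENNReal.ofReal_ne_top ENNReal.coe_ne_top
    simp only [h2] at h1
    rw [integral_toReal (measurable_op1 hφ hgm).aemeasurable
      (ae_of_all _ fun x => (hfin ENNReal.coe_ne_top hc' x).trans_lt
        (ENNReal.mul_lt_top ENNReal.coe_lt_top hB.lt_top))] at h1
    have h3 : ∫ x, (g x : ℝ) ∂ν = (∫⁻ x, (g x : ℝ≥0∞) ∂ν).toReal := by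
      rw [← integral_toReal hgm.aemeasurable (ae_of_all _ fun x => ENNReal.coe_lt_top)]
      rfl
    have h4 : ∫⁻ x, (g x : ℝ≥0∞) ∂ν ≠ ∞ := by
      refine ((lintegral_mono hc').trans_lt ?_).ne
      simp
    rw [h3] at h1
    rw [← ENNReal.ofReal_toReal (hfin' ENNReal.coe_ne_top hc').ne, h1,
      ENNReal.ofReal_mul (Real.exp_nonneg _), ENNReal.ofReal_toReal h4]
  rw [← hbind hu, heq, lintegral_smul_measure, smul_eq_mul]

lemma lintegral_opN {φ : MarkovShift A → ℝ} (hφ : Measurable φ) {p : ℝ} {h : MarkovShift A → ℝ}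
    {ν : Measure (MarkovShift A)} (hR : IsRPF φ p h ν) {B : ℝ≥0∞} (hB : B ≠ ∞)
    (hle : ∀ x, op1 φ (fun _ => 1) x ≤ B) (n : ℕ) {u : MarkovShift A → ℝ≥0∞} (hu : Measurable u) :
    ∫⁻ x, opN φ n u x ∂ν = ENNReal.ofReal (Real.exp p) ^ n * ∫⁻ x, u x ∂ν := by
  induction n generalizing u with
  | zero => simp [opN_zero]
  | succ n ih =>
    rw [opN_succ, ih (measurable_op1 hφ hu), lintegral_op1 hφ hR hB hle hu, pow_succ, mul_assoc]

section
variable {f : MarkovShift A → ℝ} {K : ℕ} {F : Finset ℕ} {W : ℕ → ℝ} {D C : ℝ}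

lemma Ctl.exists_S (hc : Ctl f K F W D C) {p : ℝ} (hP : HasGurevichPressure f p)
    (o : MarkovShift A) : ∃ S : ℝ, 0 < S ∧ ∀ x, op1 f (fun _ => 1) x ≤ ENNReal.ofReal S := by
  have hs := (hP (o.1 0) ⟨o, rfl⟩).1 (K + 1 + 1 + K) (by omega)
  set c := Real.exp (2 * (W 1 + D + K * C) - f o)
  set Z := ∑' q : {x : MarkovShift A // shift^[K + 1 + 1 + K] x = x ∧ x.1 0 = o.1 0},
    ENNReal.ofReal (Real.exp (birkhoff f (K + 1 + 1 + K) q.1)) with hZ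
  have hZt : Z ≠ ∞ := by
    rw [hZ, ← ENNReal.ofReal_tsum_of_nonneg (fun q => Real.exp_nonneg _) hs]
    exact ENNReal.ofReal_ne_top
  refine ⟨c * Z.toReal + 1, by positivity, fun x => ?_⟩
  refine le_trans ?_ (ENNReal.ofReal_le_ofReal (le_add_of_nonneg_right zero_le_one))
  rw [ENNReal.ofReal_mul (Real.exp_nonneg _), ENNReal.ofReal_toReal hZt]
  choose q hq1 hq2 hq3 using fun z : {z : MarkovShift A // shift z = x} =>
    exists_link hc.bip 0 o z.1
  choose r hr1 hr2 hr3 using fun z : {z : MarkovShift A // shift z = x} =>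
    exists_periodic hc.bip (K + 1) (q z)
  have hr0 : ∀ z, (r z).1 0 = o.1 0 := fun z => by
    rw [hr1 z 0 (by omega), hq1 z 0 le_rfl]
  have hrK : ∀ z, (r z).1 (K + 1) = z.1.1 0 := fun z => by
    rw [hr1 z _ le_rfl]
    have := shift_iter_val (0 + 1 + K) (q z) 0
    rw [hq2 z] at this
    rw [this, show 0 + (0 + 1 + K) = K + 1 by omega]
  refine tsum_le_of_inj (fun z => ⟨r z, hr2 z, hr0 z⟩) ?_ _ _ _ ?_
  · intro z z' h
    have h1 : r z = r z' := congrArg Subtype.val h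
    exact Subtype.ext (fiber_inj z.2 z'.2 (by rw [← hrK, ← hrK, h1]))
  · intro z
    rw [mul_one, ← ENNReal.ofReal_mul (Real.exp_nonneg _), ← Real.exp_add]
    refine ENNReal.ofReal_le_ofReal (Real.exp_le_exp.2 ?_)
    have h1 := hc.link_birk 0 o (q z) (hq1 z) (hq3 z)
    have h2 := hc.link_birk (K + 1) (q z) (r z) (hr1 z) (hr3 z)
    rw [zero_add, birkhoff_one] at h1
    have h3 : birkhoff f (K + 1 + 1) (q z) = birkhoff f (1 + K) (q z) + f z.1 := by
      have h4 := hq2 z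
      rw [show 0 + 1 + K = 1 + K by omega] at h4
      rw [show K + 1 + 1 = (1 + K) + 1 by omega, birkhoff_add, birkhoff_one, h4]
    show f z.1 ≤ _
    dsimp only
    linarith

end

end MarkovShift

namespace MarkovShift

variable {A : ℕ → ℕ → Bool}

section
variable {f : MarkovShift A → ℝ} {K : ℕ} {F : Finset ℕ} {W : ℕ → ℝ} {D C : ℝ}

lemma le_log_S {S : ℝ} (hS0 : 0 < S) (hS : ∀ x, op1 f (fun _ => 1) x ≤ ENNReal.ofReal S)
    (z : MarkovShift A) : f z ≤ Real.log S := by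
  rw [Real.le_log_iff_exp_le hS0, ← ENNReal.ofReal_le_ofReal_iff hS0.le]
  refine le_trans ?_ (hS (shift z))
  refine le_trans ?_ (ENNReal.le_tsum (⟨z, rfl⟩ : {y : MarkovShift A // shift y = shift z}))
  simp

lemma op1_mul_le {S : ℝ} (hS0 : 0 < S) (hS : ∀ x, op1 f (fun _ => 1) x ≤ ENNReal.ofReal S)
    {β : ℝ} (hβ : 1 ≤ β) (x : MarkovShift A) :
    op1 (fun x => β * f x) (fun _ => 1) x ≤ ENNReal.ofReal (Real.exp (β * Real.log S)) := by
  have h1 : op1 (fun x => β * f x) (fun _ => 1) x ≤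
      ENNReal.ofReal (Real.exp ((β - 1) * Real.log S)) * op1 f (fun _ => 1) x := by
    unfold op1
    refine tsum_le_of_inj id Function.injective_id _ _ _ fun z => ?_
    rw [mul_one, mul_one, ← ENNReal.ofReal_mul (Real.exp_nonneg _), ← Real.exp_add]
    refine ENNReal.ofReal_le_ofReal (Real.exp_le_exp.2 ?_)
    have := mul_le_mul_of_nonneg_left (le_log_S hS0 hS z.1) (sub_nonneg.2 hβ)
    simp only [id]
    linarith
  refine h1.trans ?_
  calc _ ≤ ENNReal.ofReal (Real.exp ((β - 1) * Real.log S)) * ENNReal.ofReal S := by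
        gcongr; exact hS x
    _ = _ := by
        rw [← ENNReal.ofReal_mul (Real.exp_nonneg _)]
        congr 1
        nth_rewrite 2 [← Real.exp_log hS0]
        rw [← Real.exp_add]; congr 1; ring

lemma rpf_summable {φ : MarkovShift A → ℝ} {p : ℝ} {h : MarkovShift A → ℝ}
    {ν : Measure (MarkovShift A)} (hR : IsRPF φ p h ν) (x : MarkovShift A) :
    Summable fun z : {z : MarkovShift A // shift z = x} => Real.exp (φ z.1) * h z.1 := by
  by_contra hns
  have h1 := hR.2.2.1 x
  unfold ruelle at h1
  rw [tsum_eq_zero_of_not_summable hns] at h1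
  have := mul_pos (Real.exp_pos p) (hR.2.1 x)
  linarith

lemma rpf_sub {φ : MarkovShift A → ℝ} {p : ℝ} {h : MarkovShift A → ℝ}
    {ν : Measure (MarkovShift A)} (hR : IsRPF φ p h ν) (x : MarkovShift A) :
    Real.exp (φ x) * h x ≤ Real.exp p * h (shift x) := by
  rw [← hR.2.2.1 (shift x)]
  exact (rpf_summable hR (shift x)).le_tsum (⟨x, rfl⟩ : {y : MarkovShift A // shift y = shift x})
    (fun z _ => mul_nonneg (Real.exp_nonneg _) (hR.2.1 _).le)

lemma rpf_op1 {φ : MarkovShift A → ℝ} {p : ℝ} {h : MarkovShift A → ℝ}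
    {ν : Measure (MarkovShift A)} (hR : IsRPF φ p h ν) :
    op1 φ (fun x => ENNReal.ofReal (h x)) =
      fun x => ENNReal.ofReal (Real.exp p) * ENNReal.ofReal (h x) := by
  funext x
  rw [← ENNReal.ofReal_mul (Real.exp_nonneg _), ← hR.2.2.1 x]
  unfold ruelle op1
  rw [ENNReal.ofReal_tsum_of_nonneg (fun z => mul_nonneg (Real.exp_nonneg _) (hR.2.1 _).le)
    (rpf_summable hR x)]
  exact tsum_congr fun z => (ENNReal.ofReal_mul (Real.exp_nonneg _)).symm

lemma p_le {S : ℝ} (hf : Continuous f) (hS0 : 0 < S)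
    (hS : ∀ x, op1 f (fun _ => 1) x ≤ ENNReal.ofReal S)
    {β : ℝ} (hβ : 1 ≤ β) {p : ℝ} {h : MarkovShift A → ℝ}
    {ν : Measure (MarkovShift A)} (hR : IsRPF (fun x => β * f x) p h ν) : p ≤ β * Real.log S := by
  have hm : Measurable (fun x => β * f x) := (continuous_const.mul hf).measurable
  have h1 := lintegral_op1 hm hR ENNReal.ofReal_ne_top (op1_mul_le hS0 hS hβ)
    (u := fun _ => 1) measurable_const
  have := hR.2.2.2.1
  have h2 : ∫⁻ x, op1 (fun x => β * f x) (fun _ => 1) x ∂ν ≤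
      ENNReal.ofReal (Real.exp (β * Real.log S)) := by
    refine (lintegral_mono (op1_mul_le hS0 hS hβ)).trans ?_
    simp
  rw [h1, lintegral_const, measure_univ, mul_one, mul_one,
    ENNReal.ofReal_le_ofReal_iff (Real.exp_nonneg _)] at h2
  exact Real.exp_le_exp.1 h2

lemma full_support (hc : Ctl f K F W D C) {φ : MarkovShift A → ℝ} (hφ : Measurable φ) {p : ℝ}
    {h : MarkovShift A → ℝ}
    {ν : Measure (MarkovShift A)} (hR : IsRPF φ p h ν) {B : ℝ≥0∞} (hB : B ≠ ∞)
    (hle : ∀ x, op1 φ (fun _ => 1) x ≤ B) (x : MarkovShift A) (m : ℕ) : ν (cylOf x m) ≠ 0 := by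
  intro h0
  have hms : MeasurableSet (cylOf x m) := (isOpen_cylOf x m).measurableSet
  have hmu : Measurable ((cylOf x m).indicator (1 : MarkovShift A → ℝ≥0∞)) :=
    measurable_one.indicator hms
  have h1 := lintegral_opN hφ hR hB hle (m + 1 + K) hmu
  have hmo : ∀ n, ∀ {u : MarkovShift A → ℝ≥0∞}, Measurable u → Measurable (opN φ n u) := by
    intro n
    induction n with
    | zero => intro u hu; rwa [opN_zero]
    | succ n ih => intro u hu; rw [opN_succ]; exact ih (measurable_op1 hφ hu)
  rw [lintegral_indicator_one hms, h0, mul_zero, lintegral_eq_zero_iff (hmo _ hmu)] at h1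
  have := hR.2.2.2.1
  obtain ⟨y, hy⟩ := h1.exists
  obtain ⟨z, hz1, hz2, -⟩ := exists_link hc.bip m x y
  have h2 : (0 : ℝ≥0∞) < opN φ (m + 1 + K) ((cylOf x m).indicator 1) y := by
    refine lt_of_lt_of_le ?_ (ENNReal.le_tsum
      (⟨z, hz2⟩ : {z : MarkovShift A // shift^[m + 1 + K] z = y}))
    have hzm : z ∈ cylOf x m := fun i hi => hz1 i hi.le
    rw [Set.indicator_of_mem hzm]
    simp [Real.exp_pos]
  rw [hy] at h2
  exact absurd h2 (by simp)

lemma opN_regular (hc : Ctl f K F W D C) {β : ℝ} (hβ : 0 ≤ β) {G : MarkovShift A → ℝ≥0∞} {n : ℕ}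
    (hG : ∀ x y : MarkovShift A, (∀ i < n, x.1 i = y.1 i) → G x = G y) {k : ℕ} (hk : 1 ≤ k)
    {x x' : MarkovShift A} (hxx : ∀ i < k, x.1 i = x'.1 i) :
    opN (fun x => β * f x) n G x ≤
      ENNReal.ofReal (Real.exp (β * W k)) * opN (fun x => β * f x) n G x' := by
  have hz0 : ∀ z : {z : MarkovShift A // shift^[n] z = x}, z.1.1 n = x'.1 0 := by
    intro z
    rw [← hxx 0 (by omega)]
    have := shift_iter_val n z.1 0
    rw [z.2, zero_add] at this
    exact this.symm
  choose T hT1 hT2 using fun z : {z : MarkovShift A // shift^[n] z = x} =>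
    exists_glue z.1.1 n x' (fun i _ => z.1.2 i) (hz0 z)
  refine tsum_le_of_inj (fun z => (⟨T z, hT2 z⟩ : {z : MarkovShift A // shift^[n] z = x'}))
    ?_ _ _ _ ?_
  · intro z z' h
    have h1 : T z = T z' := congrArg Subtype.val h
    refine Subtype.ext (pt_ext fun i => ?_)
    by_cases hi : i ≤ n
    · rw [← hT1 z i hi, ← hT1 z' i hi, h1]
    · have e1 := shift_iter_val n z.1 (i - n)
      have e2 := shift_iter_val n z'.1 (i - n)
      rw [z.2, Nat.sub_add_cancel (by omega)] at e1
      rw [z'.2, Nat.sub_add_cancel (by omega)] at e2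
      rw [← e1, ← e2]
  · intro z
    have hag : ∀ i < n + k, z.1.1 i = (T z).1 i := by
      intro i hi
      by_cases hin : i ≤ n
      · rw [hT1 z i hin]
      · have e1 := shift_iter_val n z.1 (i - n)
        have e2 := shift_iter_val n (T z) (i - n)
        rw [z.2, Nat.sub_add_cancel (by omega)] at e1
        rw [hT2 z, Nat.sub_add_cancel (by omega)] at e2
        rw [← e1, ← e2]
        exact hxx _ (by omega)
    show _ ≤ _ * (_ * G (T z))
    rw [hG z.1 (T z) (fun i hi => hag i (by omega)), ← mul_assoc,
      ← ENNReal.ofReal_mul (Real.exp_nonneg _), ← Real.exp_add, birkhoff_mul, birkhoff_mul]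
    gcongr
    have := hc.hW k hk n z.1 (T z) hag
    rw [abs_le] at this
    have h2 := mul_le_mul_of_nonneg_left this.2 hβ
    linarith

/-- Infimum over cylinders of length `m`. -/
noncomputable def lowEnv (H : MarkovShift A → ℝ≥0∞) (m : ℕ) (x : MarkovShift A) : ℝ≥0∞ :=
  ⨅ y ∈ cylOf x m, H y

lemma lowEnv_congr (H : MarkovShift A → ℝ≥0∞) (m : ℕ) (x y : MarkovShift A)
    (h : ∀ i < m, x.1 i = y.1 i) : lowEnv H m x = lowEnv H m y := by
  have : cylOf x m = cylOf y m := by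
    ext z
    exact ⟨fun hz i hi => (hz i hi).trans (h i hi), fun hz i hi => (hz i hi).trans (h i hi).symm⟩
  unfold lowEnv
  rw [this]

lemma lowEnv_le (H : MarkovShift A → ℝ≥0∞) (m : ℕ) (x : MarkovShift A) : lowEnv H m x ≤ H x :=
  iInf₂_le x (mem_cylOf_self x m)

lemma measurable_lowEnv (H : MarkovShift A → ℝ≥0∞) (m : ℕ) : Measurable (lowEnv H m) := by
  have : IsLocallyConstant (lowEnv H m) := by
    rw [IsLocallyConstant.iff_exists_open]
    exact fun x => ⟨cylOf x m, isOpen_cylOf x m, mem_cylOf_self x m,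
      fun y hy => lowEnv_congr H m y x hy⟩
  exact this.continuous.measurable

lemma tendsto_lowEnv {H : MarkovShift A → ℝ≥0∞} (hH : Continuous H) (hfin : ∀ x, H x ≠ ∞)
    (hpos : ∀ x, H x ≠ 0)
    (x : MarkovShift A) : Tendsto (fun m => H x - lowEnv H m x) atTop (𝓝 0) := by
  rw [ENNReal.tendsto_nhds_zero]
  intro ε hε
  have h1 : H x - ε < H x := ENNReal.sub_lt_self (hfin x) (hpos x) hε.ne'
  obtain ⟨m, hm⟩ := exists_cylOf_subset x (hH.continuousAt.eventually (lt_mem_nhds h1))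
  filter_upwards [eventually_ge_atTop m] with n hn
  rw [tsub_le_iff_left, ← tsub_le_iff_right]
  refine le_iInf₂ fun y hy => ?_
  exact (hm (fun i hi => hy i (by omega)) : H x - ε < H y).le

lemma h_regular (hc : Ctl f K F W D C) {S : ℝ} (hS0 : 0 < S)
    (hS : ∀ x, op1 f (fun _ => 1) x ≤ ENNReal.ofReal S)
    {β : ℝ} (hβ : 1 ≤ β) {p : ℝ} {h : MarkovShift A → ℝ}
    {ν : Measure (MarkovShift A)} (hR : IsRPF (fun x => β * f x) p h ν) {k : ℕ} (hk : 1 ≤ k)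
    {x x' : MarkovShift A} (hxx : ∀ i < k, x.1 i = x'.1 i) :
    h x ≤ Real.exp (β * W k) * h x' := by
  by_contra hcon
  have hm : Measurable (fun x => β * f x) := (continuous_const.mul hc.continuous).measurable
  have hle := op1_mul_le hS0 hS hβ
  have hprob := hR.2.2.2.1
  set H : MarkovShift A → ℝ≥0∞ := fun x => ENNReal.ofReal (h x) with hH
  have hHc : Continuous H := ENNReal.continuous_ofReal.comp hR.1
  set L := ENNReal.ofReal (Real.exp p) with hL
  have hL0 : L ≠ 0 := by simp [hL, Real.exp_pos]
  have hLt : L ≠ ∞ := ENNReal.ofReal_ne_top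
  set Q := ENNReal.ofReal (Real.exp (β * W k)) with hQ
  have hlt : Q * H x' < H x := by
    rw [hQ, hH]
    simp only
    rw [← ENNReal.ofReal_mul (Real.exp_nonneg _), ENNReal.ofReal_lt_ofReal_iff (hR.2.1 x)]
    exact not_le.1 hcon
  obtain ⟨d, hd1, hd2⟩ := exists_between hlt
  obtain ⟨m0, hm0⟩ := exists_cylOf_subset x (hHc.continuousAt.eventually (lt_mem_nhds hd2))
  set U := cylOf x (max m0 k) with hU
  have hUm : MeasurableSet U := (isOpen_cylOf x _).measurableSet
  set E : ℕ → MarkovShift A → ℝ≥0∞ := fun m x => H x - lowEnv H m x with hE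
  have hEm : ∀ m, Measurable (E m) := fun m => hHc.measurable.sub (measurable_lowEnv H m)
  have hHint : ∫⁻ x, H x ∂ν ≠ ∞ := by
    have hi : Integrable h ν := by
      by_contra hni
      have := hR.2.2.2.2.2
      rw [integral_undef hni] at this
      exact zero_ne_one this
    have h2 := hi.lintegral_lt_top
    exact h2.ne
  have hlim : Tendsto (fun m => ∫⁻ x, E m x ∂ν) atTop (𝓝 0) := by
    have := tendsto_lintegral_of_dominated_convergence (μ := ν) (F := E) (f := fun _ => 0) H hEm
      (fun m => ae_of_all _ fun x => tsub_le_self) hHint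
      (ae_of_all _ fun x => tendsto_lowEnv hHc (fun x => ENNReal.ofReal_ne_top)
        (fun x => by simp [hH, hR.2.1 x]) x)
    simpa using this
  have hbound : ∀ m, (d - Q * H x') * ν U ≤ ∫⁻ x, E m x ∂ν := by
    intro m
    have hpt : ∀ y ∈ U, L ^ m * (d - Q * H x') ≤ opN (fun x => β * f x) m (E m) y := by
      intro y hy
      have hdy : d ≤ H y :=
        (hm0 (fun i hi => hy i (lt_of_lt_of_le hi (le_max_left _ _))) : d < H y).le
      have hyx : ∀ i < k, y.1 i = x'.1 i := fun i hi =>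
        (hy i (lt_of_lt_of_le hi (le_max_right _ _))).trans (hxx i hi)
      have e1 : L ^ m * H y = opN (fun x => β * f x) m (lowEnv H m) y +
          opN (fun x => β * f x) m (E m) y := by
        rw [← opN_add, ← opN_eigen _ L H (rpf_op1 hR) m y]
        congr 1
        funext w
        exact (add_tsub_cancel_of_le (lowEnv_le H m w)).symm
      have e2 := opN_regular hc (zero_le_one.trans hβ) (n := m) (lowEnv_congr H m) hk hyx
      have e3 : opN (fun x => β * f x) m (lowEnv H m) x' ≤ L ^ m * H x' := by
        rw [← opN_eigen _ L H (rpf_op1 hR) m x']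
        exact opN_mono _ _ (lowEnv_le H m) _
      rw [ENNReal.mul_sub (fun _ _ => ENNReal.pow_ne_top hLt), tsub_le_iff_left]
      calc L ^ m * d ≤ L ^ m * H y := by gcongr
        _ ≤ Q * (L ^ m * H x') + opN (fun x => β * f x) m (E m) y := by
            rw [e1]; gcongr; exact e2.trans (by gcongr)
        _ = _ := by ring
    have h1 : L ^ m * ((d - Q * H x') * ν U) ≤ L ^ m * ∫⁻ x, E m x ∂ν := by
      rw [← lintegral_opN hm hR ENNReal.ofReal_ne_top hle m (hEm m), ← mul_assoc,
        ← setLIntegral_const]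
      refine le_trans (setLIntegral_mono' hUm hpt) (setLIntegral_le_lintegral _ _)
    exact (ENNReal.mul_le_mul_iff_right (pow_ne_zero m hL0) (ENNReal.pow_ne_top hLt)).1 h1
  have h0 : (d - Q * H x') * ν U ≤ 0 := ge_of_tendsto' hlim hbound
  rw [nonpos_iff_eq_zero, mul_eq_zero] at h0
  rcases h0 with h0 | h0
  · exact absurd (tsub_eq_zero_iff_le.1 h0) (not_le.2 hd1)
  · exact full_support hc hm hR ENNReal.ofReal_ne_top hle x _ h0

lemma h_osc (hc : Ctl f K F W D C) {S : ℝ} (hS0 : 0 < S)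
    (hS : ∀ x, op1 f (fun _ => 1) x ≤ ENNReal.ofReal S)
    {β : ℝ} (hβ : 1 ≤ β) {p : ℝ} {h : MarkovShift A → ℝ}
    {ν : Measure (MarkovShift A)} (hR : IsRPF (fun x => β * f x) p h ν)
    (x x' : MarkovShift A) :
    h x ≤ Real.exp (β * (W 1 + (W 1 + D + K * C))) * (Real.exp (K * p) * h x') := by
  set L := ENNReal.ofReal (Real.exp p) with hL
  have hL0 : L ≠ 0 := by simp [hL, Real.exp_pos]
  have hLt : L ≠ ∞ := ENNReal.ofReal_ne_top
  set H : MarkovShift A → ℝ≥0∞ := fun x => ENNReal.ofReal (h x) with hH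
  set Q := ENNReal.ofReal (Real.exp (β * (W 1 + (W 1 + D + K * C)))) with hQ
  have hβ0 : 0 ≤ β := zero_le_one.trans hβ
  have key : opN (fun x => β * f x) 1 H x ≤ Q * opN (fun x => β * f x) (0 + 1 + K) H x' := by
    choose T hT1 hT2 hT3 using fun z : {z : MarkovShift A // shift^[1] z = x} =>
      exists_link hc.bip 0 z.1 x'
    refine tsum_le_of_inj
      (fun z => (⟨T z, hT2 z⟩ : {z : MarkovShift A // shift^[0 + 1 + K] z = x'})) ?_ _ _ _ ?_
    · intro z z' hzz
      have h1 : T z = T z' := congrArg Subtype.val hzz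
      refine Subtype.ext (fiber_inj z.2 z'.2 ?_)
      rw [← hT1 z 0 le_rfl, ← hT1 z' 0 le_rfl, h1]
    · intro z
      have h1 := hc.link_birk 0 z.1 (T z) (hT1 z) (hT3 z)
      have h2 : h z.1 ≤ Real.exp (β * W 1) * h (T z) := h_regular hc hS0 hS hβ hR le_rfl
        (fun i hi => (hT1 z i (by omega)).symm)
      show ENNReal.ofReal _ * ENNReal.ofReal (h z.1) ≤
        Q * (ENNReal.ofReal _ * ENNReal.ofReal (h (T z)))
      rw [hQ, ← ENNReal.ofReal_mul (Real.exp_nonneg _), ← ENNReal.ofReal_mul (Real.exp_nonneg _),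
        ← ENNReal.ofReal_mul (Real.exp_nonneg _)]
      refine ENNReal.ofReal_le_ofReal ?_
      rw [birkhoff_mul, birkhoff_mul]
      calc _ ≤ Real.exp (β * birkhoff f 1 z.1) * (Real.exp (β * W 1) * h (T z)) := by gcongr
        _ = Real.exp (β * birkhoff f 1 z.1 + β * W 1) * h (T z) := by rw [Real.exp_add]; ring
        _ ≤ Real.exp (β * (W 1 + (W 1 + D + K * C)) + β * birkhoff f (0 + 1 + K) (T z))
            * h (T z) := by
          have := (hR.2.1 (T z)).le
          refine mul_le_mul_of_nonneg_right (Real.exp_le_exp.2 ?_) this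
          have h3 := mul_le_mul_of_nonneg_left h1 hβ0
          rw [zero_add] at h3
          rw [zero_add]
          linarith
        _ = _ := by rw [Real.exp_add]; ring
  rw [opN_eigen _ L H (rpf_op1 hR), opN_eigen _ L H (rpf_op1 hR), hQ, hL, hH] at key
  simp only at key
  rw [← ENNReal.ofReal_pow (Real.exp_nonneg _), ← ENNReal.ofReal_pow (Real.exp_nonneg _),
    ← ENNReal.ofReal_mul (by positivity), ← ENNReal.ofReal_mul (by positivity),
    ← ENNReal.ofReal_mul (by positivity), ENNReal.ofReal_le_ofReal_iff
      (by have := (hR.2.1 x').le; positivity)] at key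
  rw [pow_one, zero_add, pow_add, pow_one, ← Real.exp_nat_mul] at key
  refine le_of_mul_le_mul_left (key.trans_eq ?_) (Real.exp_pos p)
  ring

end

end MarkovShift

namespace MarkovShift

section
variable {A : ℕ → ℕ → Bool}
variable {f : MarkovShift A → ℝ} {K : ℕ} {F : Finset ℕ} {W : ℕ → ℝ} {D C : ℝ}

lemma periodic_measure (f : MarkovShift A → ℝ)
    {N : ℕ} (hN : 1 ≤ N) {q : MarkovShift A} (hq : shift^[N] q = q) :
    ∃ μ : Measure (MarkovShift A), IsInvariantProb μ ∧ Integrable f μ ∧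
      ∫ x, f x ∂μ = (N : ℝ)⁻¹ * birkhoff f N q := by
  have hN0 : (N : ℝ≥0∞) ≠ 0 := by simp; omega
  set μ : Measure (MarkovShift A) :=
    (N : ℝ≥0∞)⁻¹ • ∑ j ∈ Finset.range N, Measure.dirac (shift^[j] q) with hμ
  have hint : ∀ j ∈ Finset.range N, Integrable f (Measure.dirac (shift^[j] q)) := fun j _ =>
    integrable_dirac (by simp)
  have hintμ : Integrable f μ := by
    refine Integrable.smul_measure ?_ (by simp [hN0])
    exact integrable_finsetSum_measure.2 hint
  have hinv : IsInvariantProb μ := by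
    refine ⟨⟨?_⟩, ?_⟩
    · simp only [hμ, Measure.smul_apply, Measure.finsetSum_apply, measure_univ, Finset.sum_const,
        Finset.card_range, smul_eq_mul, nsmul_eq_mul, mul_one]
      exact ENNReal.inv_mul_cancel hN0 (by simp)
    · have hsm : Measurable (shift : MarkovShift A → MarkovShift A) := continuous_shift.measurable
      refine Measure.ext fun s hs => ?_
      rw [Measure.map_apply hsm hs]
      simp only [hμ, Measure.smul_apply, Measure.finsetSum_apply]
      congr 1
      have h1 : ∀ j, (Measure.dirac (shift^[j] q)) (shift ⁻¹' s) =
          (Measure.dirac (shift^[j + 1] q)) s := by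
        intro j
        rw [Measure.dirac_apply' _ (hsm hs), Measure.dirac_apply' _ hs,
          Function.iterate_succ_apply']
        rfl
      simp only [h1]
      have h2 := Finset.sum_range_succ (fun j => (Measure.dirac (shift^[j] q)) s) N
      rw [Finset.sum_range_succ', hq] at h2
      refine (ENNReal.add_left_inj (measure_ne_top (Measure.dirac q) s)).1 ?_
      exact h2
  have hval : ∫ x, f x ∂μ = (N : ℝ)⁻¹ * birkhoff f N q := by
    rw [hμ, integral_smul_measure, integral_finsetSum_measure hint]
    simp [birkhoff]
  exact ⟨μ, hinv, hintμ, hval⟩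

lemma periodic_le_mf {c : ℝ}
    (hbd : ∀ μ : Measure (MarkovShift A), IsInvariantProb μ → Integrable f μ → ∫ x, f x ∂μ ≤ c)
    {N : ℕ} (hN : 1 ≤ N) {q : MarkovShift A} (hq : shift^[N] q = q) :
    birkhoff f N q ≤ N * mf f := by
  have hNr : (0 : ℝ) < N := by exact_mod_cast hN
  obtain ⟨μ, hinv, hintμ, hval⟩ := periodic_measure f hN hq
  have hle : ∫ x, f x ∂μ ≤ mf f := by
    refine le_csSup ⟨c, ?_⟩ ⟨μ, hinv, hintμ, rfl⟩
    rintro _ ⟨μ', h1, h2, rfl⟩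
    exact hbd μ' h1 h2
  rw [hval, inv_mul_le_iff₀ hNr] at hle
  exact hle

lemma mf_eq (hc : Ctl f K F W D C) {V : MarkovShift A → ℝ} (hVc : Continuous V)
    {M : ℝ} (hVb : ∀ x, |V x| ≤ M) {c : ℝ}
    (hsub : ∀ x, f x + V x - V (shift x) ≤ c)
    (hcal : ∀ y, ∃ x, shift x = y ∧ f x + V x - V (shift x) = c) (o : MarkovShift A) :
    mf f = c := by
  have hbd : ∀ μ : Measure (MarkovShift A), IsInvariantProb μ → Integrable f μ →
      ∫ x, f x ∂μ ≤ c := by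
    intro μ hμ hfi
    have := hμ.1
    have hVi : Integrable V μ := Integrable.of_bound hVc.aestronglyMeasurable M
      (ae_of_all _ fun x => hVb x)
    have hmp : MeasurePreserving shift μ μ := ⟨continuous_shift.measurable, hμ.2⟩
    have hVi' : Integrable (fun x => V (shift x)) μ :=
      Integrable.of_bound (hVc.comp continuous_shift).aestronglyMeasurable M
      (ae_of_all _ fun x => hVb _)
    have h1 : ∫ x, V (shift x) ∂μ = ∫ x, V x ∂μ := by
      have h2 := integral_map (μ := μ) (φ := shift) (f := V)
        continuous_shift.measurable.aemeasurable hVc.aestronglyMeasurable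
      rw [hμ.2] at h2
      exact h2.symm
    have hfV : Integrable (fun x => f x + V x) μ := hfi.add hVi
    have h2 : ∫ x, (f x + V x - V (shift x)) ∂μ ≤ ∫ _x, c ∂μ :=
      integral_mono (hfV.sub hVi') (integrable_const c) hsub
    rw [integral_sub hfV hVi', integral_add hfi hVi, h1, integral_const] at h2
    simpa using h2
  choose pre hpre1 hpre2 using hcal
  have hz : ∀ n, birkhoff f n (pre^[n] o) = n * c + V o - V (pre^[n] o) := by
    intro n
    induction n with
    | zero => simp [birkhoff]
    | succ n ih =>
      rw [birkhoff_succ, Function.iterate_succ_apply', hpre1, ih]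
      have := hpre2 (pre^[n] o)
      rw [hpre1] at this
      push_cast
      linarith
  set R := 2 * M + (W 1 + D + K * C) + K * |c| with hRdef
  have hlow : ∀ n : ℕ, (((n + 1 + K : ℕ) : ℝ)) * (c - mf f) ≤ R := by
    intro n
    obtain ⟨q, hq1, hq2, hq3⟩ := exists_periodic hc.bip n (pre^[n + 1] o)
    have h1 := hc.link_birk n _ q hq1 hq3
    have h2 := periodic_le_mf hbd (by omega) hq2
    rw [hz] at h1
    have h3 := abs_le.1 (hVb o)
    have h4 := abs_le.1 (hVb (pre^[n + 1] o))
    have h5 : (K : ℝ) * c ≤ K * |c| := by gcongr; exact le_abs_self c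
    rw [mul_sub]
    have h6 : ((n + 1 + K : ℕ) : ℝ) * c = ((n + 1 : ℕ) : ℝ) * c + K * c := by push_cast; ring
    rw [h6]
    linarith
  refine le_antisymm ?_ ?_
  · by_cases hne : ({r | ∃ μ : Measure (MarkovShift A),
      IsInvariantProb μ ∧ Integrable f μ ∧ ∫ x, f x ∂μ = r} : Set ℝ).Nonempty
    · refine csSup_le hne ?_
      rintro _ ⟨μ', h1, h2, rfl⟩
      exact hbd μ' h1 h2
    · exfalso
      obtain ⟨q, hq1, hq2, hq3⟩ := exists_periodic hc.bip 0 o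
      apply hne
      obtain ⟨μ, hμ1, hμ2, -⟩ := periodic_measure f (by omega) hq2
      exact ⟨_, μ, hμ1, hμ2, rfl⟩
  · by_contra hlt
    have hd : 0 < c - mf f := by linarith [not_le.1 hlt]
    obtain ⟨n, hn⟩ := exists_nat_gt (R / (c - mf f))
    rw [div_lt_iff₀ hd] at hn
    have := hlow n
    have h7 : (n : ℝ) * (c - mf f) ≤ ((n + 1 + K : ℕ) : ℝ) * (c - mf f) := by
      refine mul_le_mul_of_nonneg_right ?_ hd.le
      exact_mod_cast (by omega : n ≤ n + 1 + K)
    linarith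

end

theorem main_aux
    (A : ℕ → ℕ → Bool)
    (hbip : FinitelyPrimitive A)
    (f : MarkovShift A → ℝ)
    (hWalters : SatisfiesWalters f)
    (hVar1 : Var1Finite f)
    (P : ℝ → ℝ)
    (hPfin : HasGurevichPressure f (P 1))
    (h : ℝ → MarkovShift A → ℝ)
    (ν : ℝ → Measure (MarkovShift A))
    (hRPF : ∀ β : ℝ, 0 < β → IsRPF (fun x => β * f x) (P β) (h β) (ν β))
    (βs : ℕ → ℝ) (hβtop : Tendsto βs atTop atTop)
    (V : MarkovShift A → ℝ)
    (hconv : ∀ x, Tendsto (fun i => (1 / βs i) * Real.log (h (βs i) x)) atTop (𝓝 (V x)))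
    (o : MarkovShift A) :
    IsCalibratedSubaction f V := by
  obtain ⟨K, F, W, D, C, hc⟩ := exists_ctl hbip f hWalters hVar1
  obtain ⟨S, hS0, hS⟩ := hc.exists_S hPfin o
  set M := W 1 + (W 1 + D + K * C) + K * |Real.log S| with hM
  set v : ℝ → MarkovShift A → ℝ := fun β x => (1 / β) * Real.log (h β x) with hv
  have hpos : ∀ β, 1 ≤ β → ∀ x, 0 < h β x := fun β hβ x => (hRPF β (by linarith)).2.1 x
  have hvexp : ∀ β, 1 ≤ β → ∀ x, h β x = Real.exp (β * v β x) := by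
    intro β hβ x
    have hβ0 : β ≠ 0 := by linarith
    rw [hv]
    simp only
    rw [← mul_assoc, mul_one_div_cancel hβ0, one_mul, Real.exp_log (hpos β hβ x)]
  have hPle : ∀ β, 1 ≤ β → P β ≤ β * Real.log S := fun β hβ =>
    p_le hc.continuous hS0 hS hβ (hRPF β (by linarith))
  have hosc : ∀ β, 1 ≤ β → ∀ x x', v β x - v β x' ≤ M := by
    intro β hβ x x'
    have hβ0 : 0 < β := by linarith
    have h1 := h_osc hc hS0 hS hβ (hRPF β hβ0) x x'
    rw [hvexp β hβ, hvexp β hβ, ← Real.exp_add, ← Real.exp_add, Real.exp_le_exp] at h1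
    have h2 : (K : ℝ) * P β ≤ K * (β * |Real.log S|) := by
      gcongr
      exact (hPle β hβ).trans (by gcongr; exact le_abs_self _)
    have h3 : β * (v β x - v β x') ≤ β * M := by rw [hM]; linarith
    exact le_of_mul_le_mul_left h3 hβ0
  have hreg : ∀ β, 1 ≤ β → ∀ k, 1 ≤ k → ∀ x x', (∀ i < k, x.1 i = x'.1 i) →
      v β x - v β x' ≤ W k := by
    intro β hβ k hk x x' hxx
    have hβ0 : 0 < β := by linarith
    have h1 := h_regular hc hS0 hS hβ (hRPF β hβ0) hk hxx
    rw [hvexp β hβ, hvexp β hβ, ← Real.exp_add, Real.exp_le_exp] at h1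
    have h3 : β * (v β x - v β x') ≤ β * W k := by linarith
    exact le_of_mul_le_mul_left h3 hβ0
  have hsubβ : ∀ β, 1 ≤ β → ∀ x, f x + v β x - v β (shift x) ≤ P β / β := by
    intro β hβ x
    have hβ0 : 0 < β := by linarith
    have h1 := rpf_sub (hRPF β hβ0) x
    rw [hvexp β hβ, hvexp β hβ, ← Real.exp_add, ← Real.exp_add, Real.exp_le_exp] at h1
    rw [le_div_iff₀ hβ0]
    linarith
  have hev : ∀ᶠ i in atTop, 1 ≤ βs i := hβtop.eventually_ge_atTop 1
  obtain ⟨c, -, ψ, hψ, hclim⟩ := (isCompact_Icc (a := f o - M) (b := Real.log S)).tendsto_subseq'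
    (x := fun i => P (βs i) / βs i) (Eventually.frequently (by
      filter_upwards [hev] with i hi
      have hi0 : 0 < βs i := by linarith
      constructor
      · have h1 := hsubβ _ hi o
        have h2 := hosc _ hi (shift o) o
        linarith
      · rw [div_le_iff₀ hi0]
        have := hPle _ hi
        linarith))
  set b : ℕ → ℝ := fun i => βs (ψ i) with hb
  have hbtop : Tendsto b atTop atTop := hβtop.comp hψ.tendsto_atTop
  have hb1 : ∀ᶠ i in atTop, 1 ≤ b i := hbtop.eventually_ge_atTop 1
  have hvlim : ∀ x, Tendsto (fun i => v (b i) x) atTop (𝓝 (V x)) := fun x =>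
    (hconv x).comp hψ.tendsto_atTop
  have hplim : Tendsto (fun i => P (b i) / b i) atTop (𝓝 c) := hclim
  have hVreg : ∀ k, 1 ≤ k → ∀ x x', (∀ i < k, x.1 i = x'.1 i) → V x - V x' ≤ W k := by
    intro k hk x x' hxx
    refine le_of_tendsto ((hvlim x).sub (hvlim x')) ?_
    filter_upwards [hb1] with i hi using hreg _ hi k hk x x' hxx
  have hVosc : ∀ x x', V x - V x' ≤ M := by
    intro x x'
    refine le_of_tendsto ((hvlim x).sub (hvlim x')) ?_
    filter_upwards [hb1] with i hi using hosc _ hi x x'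
  have hVc : Continuous V := by
    rw [continuous_iff_continuousAt]
    intro x
    rw [ContinuousAt, Metric.tendsto_nhds]
    intro ε hε
    obtain ⟨k, hk, hk1⟩ :=
      ((hc.Wlim.eventually (gt_mem_nhds hε)).and (eventually_ge_atTop 1)).exists
    filter_upwards [(isOpen_cylOf x k).mem_nhds (mem_cylOf_self _ _)] with y hy
    have h1 := hVreg k hk1 y x hy
    have h2 := hVreg k hk1 x y (fun i hi => (hy i hi).symm)
    rw [Real.dist_eq, abs_lt]
    constructor <;> linarith
  have hVb : ∀ x, |V x| ≤ |V o| + M := by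
    intro x
    have h1 := hVosc x o
    have h2 := hVosc o x
    have h3 := le_abs_self (V o)
    have h4 := neg_abs_le (V o)
    rw [abs_le]
    constructor <;> linarith
  have hsub : ∀ x, f x + V x - V (shift x) ≤ c := by
    intro x
    refine le_of_tendsto_of_tendsto ((tendsto_const_nhds.add (hvlim x)).sub (hvlim (shift x)))
      hplim ?_
    filter_upwards [hb1] with i hi using hsubβ _ hi x
  have hcal : ∀ y, ∃ x, shift x = y ∧ f x + V x - V (shift x) = c := by
    intro y
    by_contra hcon
    push Not at hcon
    have hneg : ∀ z : {z : MarkovShift A // shift z = y}, f z.1 + V z.1 - V y - c < 0 := by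
      intro z
      have h1 := lt_of_le_of_ne (hsub z.1) (hcon z.1 z.2)
      rw [z.2] at h1
      linarith
    set s : ℕ → {z : MarkovShift A // shift z = y} → ℝ := fun i z =>
      f z.1 + v (b i) z.1 - v (b i) y - P (b i) / b i with hs
    have hslim : ∀ z, Tendsto (fun i => s i z) atTop (𝓝 (f z.1 + V z.1 - V y - c)) := fun z =>
      ((tendsto_const_nhds.add (hvlim z.1)).sub (hvlim y)).sub hplim
    have hsum1 : ∀ᶠ i in atTop, ∑' z, Real.exp (b i * s i z) = 1 := by
      filter_upwards [hb1] with i hi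
      have hi0 : 0 < b i := by linarith
      have h1 := (hRPF (b i) hi0).2.2.1 y
      unfold ruelle at h1
      have h2 : ∀ z : {z : MarkovShift A // shift z = y}, Real.exp (b i * s i z) =
          (Real.exp (b i * f z.1) * h (b i) z.1) * (Real.exp (P (b i)) * h (b i) y)⁻¹ := by
        intro z
        rw [hvexp _ hi, hvexp _ hi, ← Real.exp_add, ← Real.exp_add, ← Real.exp_neg, ← Real.exp_add]
        congr 1
        rw [hs]
        field_simp
        ring
      simp only [h2]
      rw [tsum_mul_right, h1]
      exact mul_inv_cancel₀ (mul_pos (Real.exp_pos _) (hpos _ hi y)).ne'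
    have hsle : ∀ᶠ i in atTop, ∀ z, s i z ≤ 0 := by
      filter_upwards [hb1] with i hi z
      have := hsubβ _ hi z.1
      rw [z.2] at this
      simp only [hs]
      linarith
    have hexp0 : ∀ z, Tendsto (fun i => Real.exp (b i * s i z)) atTop (𝓝 0) := by
      intro z
      refine Real.tendsto_exp_atBot.comp ?_
      exact hbtop.atTop_mul_neg (hneg z) (hslim z)
    have hsumm : Summable fun z : {z : MarkovShift A // shift z = y} =>
        Real.exp (f z.1) := by
      have h1 : op1 f (fun _ => 1) y ≠ ∞ := ((hS y).trans_lt ENNReal.ofReal_lt_top).ne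
      unfold op1 at h1
      have h2 := ENNReal.summable_toReal h1
      refine h2.congr fun z => ?_
      rw [mul_one, ENNReal.toReal_ofReal (Real.exp_nonneg _)]
    have hlimsum : Tendsto (fun i => ∑' z, Real.exp (b i * s i z)) atTop
        (𝓝 (∑' _z : {z : MarkovShift A // shift z = y}, (0 : ℝ))) := by
      refine tendsto_tsum_of_dominated_convergence (hsumm.mul_left (Real.exp (M - c + 1))) hexp0 ?_
      filter_upwards [hb1, hsle, hplim.eventually (lt_mem_nhds (sub_one_lt c))] with i hi hi2 hi3 z
      rw [Real.norm_eq_abs, abs_of_pos (Real.exp_pos _), ← Real.exp_add, Real.exp_le_exp]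
      have h1 : b i * s i z ≤ 1 * s i z := mul_le_mul_of_nonpos_right hi (hi2 z)
      have h2 := hosc _ hi z.1 y
      have h3 : s i z ≤ M - c + 1 + f z.1 := by
        simp only [hs]
        linarith
      linarith
    rw [tsum_zero] at hlimsum
    have h1 : Tendsto (fun i => ∑' z, Real.exp (b i * s i z)) atTop (𝓝 1) :=
      tendsto_const_nhds.congr' (hsum1.mono fun i hi => hi.symm)
    exact zero_ne_one (tendsto_nhds_unique hlimsum h1)
  have hmf : mf f = c := mf_eq hc hVc hVb hsub hcal o
  refine ⟨hVc, ⟨_, hVb⟩, fun x => ?_, fun y => ?_⟩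
  · rw [hmf]; linarith [hsub x]
  · obtain ⟨x, h1, h2⟩ := hcal y
    exact ⟨x, h1, by rw [hmf]; linarith⟩

end MarkovShift

namespace MarkovShift

/-- Any limit, uniform on compact sets, of `(1/β_i) log h_{β_i}` along a sequence
`β_i → ∞` is a bounded calibrated sub-action for `f`. -/
theorem limit_of_log_eigenfunctions_is_calibrated_subaction
    (A : ℕ → ℕ → Bool)
    (hmix : TopologicallyMixing A)
    (hbip : FinitelyPrimitive A)
    (f : MarkovShift A → ℝ)
    (hWalters : SatisfiesWalters f)
    (hVar1 : Var1Finite f)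
    (P : ℝ → ℝ)
    (hPfin : HasGurevichPressure f (P 1))
    (h : ℝ → MarkovShift A → ℝ)
    (ν : ℝ → Measure (MarkovShift A))
    (hRPF : ∀ β : ℝ, 0 < β → IsRPF (fun x => β * f x) (P β) (h β) (ν β))
    (βs : ℕ → ℝ) (hβpos : ∀ i, 0 < βs i) (hβtop : Tendsto βs atTop atTop)
    (V : MarkovShift A → ℝ)
    (hconv : ∀ K : Set (MarkovShift A), IsCompact K →
      TendstoUniformlyOn (fun i x => (1 / βs i) * Real.log (h (βs i) x)) V atTop K) :
    IsCalibratedSubaction f V := by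
  rcases isEmpty_or_nonempty (MarkovShift A) with hE | ⟨⟨o⟩⟩
  · refine ⟨?_, ⟨0, fun x => hE.elim x⟩, fun x => hE.elim x, fun x => hE.elim x⟩
    rw [continuous_iff_continuousAt]
    exact fun x => hE.elim x
  · refine main_aux A hbip f hWalters hVar1 P hPfin h ν hRPF βs hβtop V (fun x => ?_) o
    exact (hconv {x} isCompact_singleton).tendsto_at (Set.mem_singleton x)

end MarkovShift
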